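/- arXiv:2005.13627 — 2 statements merged into one kernel-verified Lean document; each statement's English description precedes it below -/
import Mathlib

section
/- Let 0<α<1, p>1, and σ > (1+α)p/(p-1). There exists a constant C > 0, depending only on α, p, σ, such that for every T > 0, with w_1(t) := (1 - t/T)^σ on [0,T], one has ∫_0^T (w_1(t))^{-1/(p-1)} |D^{1+α}_{t|T} w_1(t)|^{p/(p-1)} dt = C T^{1 - (1+α)p/(p-1)}. -/
/-!
The substitution `s = (T - τ) u + τ` turns the fractional integral of `w₁` into a power:
`∫_τ^T (s - τ)^(-α) (1 - s/T)^σ ds = B T^(-σ) (T - τ)^(1 - α + σ)`, where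
`B = ∫_0^1 u^(-α) (1 - u)^σ du > 0` (`betaConst`). Differentiating twice gives
`D^{1+α} w₁(t) = K T^(-σ) (T - t)^(σ - α - 1)` for `t < T`, with `K > 0`
(`fracDerivRight'_w1`). With `q = p/(p-1)`, so that `q - 1/(p-1) = 1`, the integrand is therefore
`K^q T^(-σ) (T - t)^(σ - (1+α) q)` (`integrand_eq`), whose exponent is positive by hypothesis,
and integrating this power over `(0, T)` gives the claim with `C = K^q / (σ - (1+α) q + 1)`.
-/

open MeasureTheory Real

/-- The right-sided Riemann–Liouville fractional derivative of order `α ∈ (0,1)` with right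
endpoint `b`: `D^α_{t|b} f(t) = -(1/Γ(1-α)) (d/dt) ∫_t^b (s-t)^{-α} f(s) ds`. -/
noncomputable def fracDerivRight (α b : ℝ) (f : ℝ → ℝ) : ℝ → ℝ :=
  fun t => -(1 / Real.Gamma (1 - α)) *
    deriv (fun τ => ∫ s in Set.Ioc τ b, (s - τ) ^ (-α) * f s) t

/-- The right-sided Riemann–Liouville fractional derivative of order `1 + α`:
`D^{1+α}_{t|b} f = -(d/dt) D^α_{t|b} f`. -/
noncomputable def fracDerivRight' (α b : ℝ) (f : ℝ → ℝ) : ℝ → ℝ :=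
  fun t => -deriv (fracDerivRight α b f) t

/-- The Beta integral `B(1 - α, σ + 1)`. -/
noncomputable def betaConst (α σ : ℝ) : ℝ := ∫ u in (0 : ℝ)..1, u ^ (-α) * (1 - u) ^ σ

lemma betaConst_pos {α σ : ℝ} (hα1 : α < 1) (hσ : 0 < σ) : 0 < betaConst α σ := by
  refine intervalIntegral.intervalIntegral_pos_of_pos_on ?_ ?_ zero_lt_one
  · refine (intervalIntegral.intervalIntegrable_rpow' (by linarith)).mul_continuousOn ?_
    exact Continuous.continuousOn
      ((continuous_const.sub continuous_id).rpow_const fun _ => Or.inr hσ.le)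
  · intro u hu
    have h1 := hu.1
    have h2 : 0 < 1 - u := by linarith [hu.2]
    positivity

lemma fracIntegral_w1 {α σ T τ : ℝ} (hT : 0 < T) (hτ : τ < T) :
    ∫ s in Set.Ioc τ T, (s - τ) ^ (-α) * (1 - s / T) ^ σ =
      betaConst α σ * T ^ (-σ) * (T - τ) ^ (1 - α + σ) := by
  have hc : 0 < T - τ := sub_pos.2 hτ
  have h := intervalIntegral.integral_comp_mul_add (a := 0) (b := 1)
    (fun s => (s - τ) ^ (-α) * (1 - s / T) ^ σ) hc.ne' τ
  simp only [mul_zero, zero_add, mul_one, sub_add_cancel, smul_eq_mul] at h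
  rw [← intervalIntegral.integral_of_le hτ.le]
  rw [eq_inv_mul_iff_mul_eq₀ hc.ne'] at h
  rw [← h, betaConst]
  have h2 : ∫ u in (0 : ℝ)..1,
      ((T - τ) * u + τ - τ) ^ (-α) * (1 - ((T - τ) * u + τ) / T) ^ σ =
      ∫ u in (0 : ℝ)..1, ((T - τ) ^ (-α) * (T - τ) ^ σ * T ^ (-σ)) *
        (u ^ (-α) * (1 - u) ^ σ) := by
    refine intervalIntegral.integral_congr fun u hu => ?_
    rw [Set.uIcc_of_le zero_le_one] at hu
    have h1 := hu.1
    have h2 : 0 ≤ 1 - u := by linarith [hu.2]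
    have e : 1 - ((T - τ) * u + τ) / T = (T - τ) * (1 - u) / T := by field_simp; ring
    simp only [add_sub_cancel_right]
    rw [e, mul_rpow hc.le h1, div_rpow (by positivity) hT.le, mul_rpow hc.le h2,
      rpow_neg hT.le]
    ring
  rw [h2, intervalIntegral.integral_const_mul, show 1 - α + σ = 1 + (-α) + σ by ring,
    rpow_add hc, rpow_add hc, rpow_one]
  ring

lemma hasDerivAt_const_mul_sub_rpow {T t : ℝ} (c r : ℝ) (ht : t < T) :
    HasDerivAt (fun τ => c * (T - τ) ^ r) (-(c * r * (T - t) ^ (r - 1))) t := by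
  have h := (((hasDerivAt_id t).const_sub T).rpow_const (p := r)
    (Or.inl (sub_pos.2 ht).ne')).const_mul c
  refine h.congr_deriv ?_
  simp only [id_eq]
  ring

lemma fracDerivRight_w1 {α σ T t : ℝ} (hT : 0 < T) (ht : t < T) :
    fracDerivRight α T (fun s => (1 - s / T) ^ σ) t =
      1 / Real.Gamma (1 - α) * (betaConst α σ * T ^ (-σ) * (1 - α + σ)) * (T - t) ^ (σ - α) := by
  have h : (fun τ => ∫ s in Set.Ioc τ T, (s - τ) ^ (-α) * (1 - s / T) ^ σ) =ᶠ[nhds t]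
      fun τ => betaConst α σ * T ^ (-σ) * (T - τ) ^ (1 - α + σ) := by
    filter_upwards [Iio_mem_nhds ht] with τ hτ using fracIntegral_w1 hT hτ
  rw [fracDerivRight, h.deriv_eq, (hasDerivAt_const_mul_sub_rpow _ _ ht).deriv,
    show 1 - α + σ - 1 = σ - α by ring]
  ring

lemma fracDerivRight'_w1 {α σ T t : ℝ} (hT : 0 < T) (ht : t < T) :
    fracDerivRight' α T (fun s => (1 - s / T) ^ σ) t =
      1 / Real.Gamma (1 - α) * betaConst α σ * (1 - α + σ) * (σ - α) * T ^ (-σ) *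
        (T - t) ^ (σ - α - 1) := by
  have h : fracDerivRight α T (fun s => (1 - s / T) ^ σ) =ᶠ[nhds t]
      fun τ => 1 / Real.Gamma (1 - α) * (betaConst α σ * T ^ (-σ) * (1 - α + σ)) *
        (T - τ) ^ (σ - α) := by
    filter_upwards [Iio_mem_nhds ht] with τ hτ using fracDerivRight_w1 hT hτ
  rw [fracDerivRight', h.deriv_eq, (hasDerivAt_const_mul_sub_rpow _ _ ht).deriv]
  ring

/-- The exponent bookkeeping: `x` stands for `T - t` and `K` for the constant in
`D^{1+α} w₁`. -/
lemma integrand_eq {α p σ K T x : ℝ} (hp : 1 < p) (hK : 0 < K) (hT : 0 < T) (hx : 0 < x) :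
    ((x / T) ^ σ) ^ (-(1 / (p - 1))) * |K * T ^ (-σ) * x ^ (σ - α - 1)| ^ (p / (p - 1)) =
      K ^ (p / (p - 1)) * T ^ (-σ) * x ^ (σ - (1 + α) * p / (p - 1)) := by
  have hp' : p - 1 ≠ 0 := by linarith
  rw [abs_of_pos (by positivity), div_rpow hx.le hT.le, div_rpow (by positivity) (by positivity),
    mul_rpow (by positivity) (by positivity), mul_rpow (by positivity) (by positivity),
    ← rpow_mul hx.le, ← rpow_mul hT.le, ← rpow_mul hT.le, ← rpow_mul hx.le]
  have e1 : x ^ (σ - (1 + α) * p / (p - 1)) =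
      x ^ (σ * -(1 / (p - 1))) * x ^ ((σ - α - 1) * (p / (p - 1))) := by
    rw [← rpow_add hx]
    congr 1
    field_simp
    ring
  have e2 : T ^ (-σ) = T ^ (-σ * (p / (p - 1))) / T ^ (σ * -(1 / (p - 1))) := by
    rw [← rpow_sub hT]
    congr 1
    field_simp
    ring
  rw [e1, e2]
  ring

/-- with `w₁(t) = (1 - t/T)^σ`, there is `C = C(α,p,σ) > 0` with
`∫_0^T w₁^{-1/(p-1)} |D^{1+α}_{t|T} w₁|^{p/(p-1)} dt = C T^{1 - (1+α)p/(p-1)}`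
for every `T > 0`. -/
theorem integral_fracDeriv'_w1 (α p σ : ℝ) (hα0 : 0 < α) (hα1 : α < 1) (hp : 1 < p)
    (hσ : (1 + α) * p / (p - 1) < σ) :
    ∃ C > (0 : ℝ), ∀ T > (0 : ℝ),
      (∫ t in Set.Ioc (0 : ℝ) T,
        ((1 - t / T) ^ σ) ^ (-(1 / (p - 1))) *
          |fracDerivRight' α T (fun s => (1 - s / T) ^ σ) t| ^ (p / (p - 1))) =
        C * T ^ (1 - (1 + α) * p / (p - 1)) := by
  have hp' : 0 < p - 1 := sub_pos.2 hp
  have hσ1 : 1 + α < σ := by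
    refine lt_trans ?_ hσ
    rw [lt_div_iff₀ hp']
    nlinarith
  have hB := betaConst_pos hα1 (show 0 < σ by linarith)
  have hΓ : 0 < Real.Gamma (1 - α) := Real.Gamma_pos_of_pos (by linarith)
  have h1 : 0 < 1 - α + σ := by linarith
  have h2 : 0 < σ - α := by linarith
  set K := 1 / Real.Gamma (1 - α) * betaConst α σ * (1 - α + σ) * (σ - α) with hK
  have hKpos : 0 < K := by positivity
  set r := σ - (1 + α) * p / (p - 1) with hr
  have hrpos : 0 < r := sub_pos.2 hσ
  refine ⟨K ^ (p / (p - 1)) / (r + 1), by positivity, fun T hT => ?_⟩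
  have hI : ∫ t in (0 : ℝ)..T, (T - t) ^ r = T ^ (r + 1) / (r + 1) := by
    rw [intervalIntegral.integral_comp_sub_left (fun x => x ^ r) T, sub_self, sub_zero,
      integral_rpow (Or.inl (by linarith)), zero_rpow (by linarith), sub_zero]
  -- The formula for the derivative holds for `t < T` only, so the endpoint is discarded.
  rw [integral_Ioc_eq_integral_Ioo, setIntegral_congr_fun
    (g := fun t => K ^ (p / (p - 1)) * T ^ (-σ) * (T - t) ^ r) measurableSet_Ioo,
    ← integral_Ioc_eq_integral_Ioo, ← intervalIntegral.integral_of_le hT.le,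
    intervalIntegral.integral_const_mul, hI,
    show 1 - (1 + α) * p / (p - 1) = -σ + (r + 1) by rw [hr]; ring,
    rpow_add hT (-σ)]
  · ring
  · intro t ht
    have e : 1 - t / T = (T - t) / T := by field_simp
    simp only
    rw [fracDerivRight'_w1 hT ht.2, ← hK, e]
    exact integrand_eq hp hKpos hT (sub_pos.2 ht.2)
end

section
/- Let n≥1 and m≥1 be integers, let ℓ > 2m be a real number, and let φ ∈ C_c^∞(ℝ^n) with 0 ≤ φ ≤ 1. Then there exists a constant C = C(m, ℓ, φ) > 0 such that |Δ^m(φ^ℓ)(x)| ≤ C (φ(x))^{ℓ - 2m} for all x ∈ ℝ^n, where Δ^m denotes the m-th iterated Laplacian. -/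
/-! Where `s ≥ 1`, the function `φ ^ s * g` with `g` smooth is differentiable everywhere (also at the
zeros of `φ`), and each partial derivative is again of this shape with exponent `s - 1`:
`∂ᵢ (φ ^ s * g) = φ ^ (s - 1) * (s * ∂ᵢφ * g + φ * ∂ᵢg)`. Starting from `φ ^ ℓ * 1` and
differentiating `2 * m < ℓ` times gives `Δ ^ m (φ ^ ℓ) = φ ^ (ℓ - 2 * m) * g` with `g` smooth. The
factor `g` is bounded on the compact support of `φ`, and outside it both sides vanish because
`ℓ - 2 * m > 0`. -/

open MeasureTheory Real

/-- Partial derivative in the `i`-th coordinate direction on `ℝⁿ`. -/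
noncomputable def pderivE (n : ℕ) (i : Fin n)
    (f : EuclideanSpace ℝ (Fin n) → ℝ) : EuclideanSpace ℝ (Fin n) → ℝ :=
  fun x => fderiv ℝ f x (EuclideanSpace.single i 1)

/-- The Laplacian `Δ f = Σᵢ ∂²f/∂xᵢ²` on `ℝⁿ`. -/
noncomputable def lapE (n : ℕ) (f : EuclideanSpace ℝ (Fin n) → ℝ) :
    EuclideanSpace ℝ (Fin n) → ℝ :=
  fun x => ∑ i : Fin n, pderivE n i (pderivE n i f) x

lemma contDiff_pderivE {n : ℕ} (i : Fin n) {g : EuclideanSpace ℝ (Fin n) → ℝ}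
    (hg : ContDiff ℝ (⊤ : ℕ∞) g) : ContDiff ℝ (⊤ : ℕ∞) (pderivE n i g) :=
  (hg.fderiv_right (m := ((⊤ : ℕ∞) : WithTop ℕ∞)) (by simp)).clm_apply contDiff_const

lemma pderivE_rpow_mul {n : ℕ} (i : Fin n) {φ g : EuclideanSpace ℝ (Fin n) → ℝ} {s : ℝ}
    (hs : 1 ≤ s) (hφ : ContDiff ℝ (⊤ : ℕ∞) φ) (hφ0 : ∀ x, 0 ≤ φ x)
    (hg : ContDiff ℝ (⊤ : ℕ∞) g) :
    pderivE n i (fun x => φ x ^ s * g x) =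
      fun x => φ x ^ (s - 1) * (s * pderivE n i φ x * g x + φ x * pderivE n i g x) := by
  funext x
  have h1 : HasFDerivAt φ (fderiv ℝ φ x) x := (hφ.differentiable (by simp) x).hasFDerivAt
  have h2 : HasFDerivAt g (fderiv ℝ g x) x := (hg.differentiable (by simp) x).hasFDerivAt
  have h3 := (h1.rpow_const (p := s) (Or.inr hs)).mul h2
  have h4 : φ x ^ s = φ x ^ (s - 1) * φ x := by
    rw [← Real.rpow_add_one' (hφ0 x) (by linarith), sub_add_cancel]
  have h5 : pderivE n i (fun x => φ x ^ s * g x) x = _ :=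
    congrArg (fun L => L (EuclideanSpace.single i 1)) h3.fderiv
  rw [h5]
  simp only [pderivE, add_apply, smul_apply, smul_eq_mul, h4]
  ring

lemma lapE_rpow_mul {n : ℕ} {φ g : EuclideanSpace ℝ (Fin n) → ℝ} {s : ℝ}
    (hs : 2 ≤ s) (hφ : ContDiff ℝ (⊤ : ℕ∞) φ) (hφ0 : ∀ x, 0 ≤ φ x)
    (hg : ContDiff ℝ (⊤ : ℕ∞) g) :
    ∃ h : EuclideanSpace ℝ (Fin n) → ℝ, ContDiff ℝ (⊤ : ℕ∞) h ∧
      lapE n (fun x => φ x ^ s * g x) = fun x => φ x ^ (s - 2) * h x := by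
  have key : ∀ i : Fin n, ∃ h : EuclideanSpace ℝ (Fin n) → ℝ, ContDiff ℝ (⊤ : ℕ∞) h ∧
      pderivE n i (pderivE n i (fun x => φ x ^ s * g x)) = fun x => φ x ^ (s - 2) * h x := by
    intro i
    have hdφ := contDiff_pderivE i hφ
    have hg' : ContDiff ℝ (⊤ : ℕ∞)
        (fun x => s * pderivE n i φ x * g x + φ x * pderivE n i g x) :=
      ((contDiff_const.mul hdφ).mul hg).add (hφ.mul (contDiff_pderivE i hg))
    rw [pderivE_rpow_mul i (by linarith) hφ hφ0 hg,
      pderivE_rpow_mul i (by linarith) hφ hφ0 hg', show s - 1 - 1 = s - 2 by ring]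
    exact ⟨_, ((contDiff_const.mul hdφ).mul hg').add (hφ.mul (contDiff_pderivE i hg')), rfl⟩
  choose h hh hh' using key
  refine ⟨fun x => ∑ i, h i x, ContDiff.sum fun i _ => hh i, ?_⟩
  funext x
  simp only [lapE, hh', Finset.mul_sum]

lemma iterate_lapE_rpow {n : ℕ} {φ : EuclideanSpace ℝ (Fin n) → ℝ} {ℓ : ℝ}
    (hφ : ContDiff ℝ (⊤ : ℕ∞) φ) (hφ0 : ∀ x, 0 ≤ φ x) (m : ℕ) (hm : 2 * (m : ℝ) ≤ ℓ) :
    ∃ g : EuclideanSpace ℝ (Fin n) → ℝ, ContDiff ℝ (⊤ : ℕ∞) g ∧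
      (lapE n)^[m] (fun y => φ y ^ ℓ) = fun x => φ x ^ (ℓ - 2 * (m : ℝ)) * g x := by
  induction m with
  | zero => exact ⟨fun _ => 1, contDiff_const, by simp⟩
  | succ k ih =>
    push_cast at hm ⊢
    obtain ⟨g, hg, hg'⟩ := ih (by linarith)
    obtain ⟨h, hh, hh'⟩ := lapE_rpow_mul (s := ℓ - 2 * (k : ℝ)) (by linarith) hφ hφ0 hg
    refine ⟨h, hh, ?_⟩
    rw [Function.iterate_succ_apply', hg', hh',
      show ℓ - 2 * (k : ℝ) - 2 = ℓ - 2 * ((k : ℝ) + 1) by ring]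

/-- for `φ ∈ C_c^∞(ℝⁿ)` with `0 ≤ φ ≤ 1` and a real `ℓ > 2m`, one has
`|Δ^m(φ^ℓ)(x)| ≤ C φ(x)^{ℓ-2m}` for all `x`. -/
theorem iteratedLaplacian_rpow_bound (n m : ℕ) (hn : 1 ≤ n) (hm : 1 ≤ m)
    (ℓ : ℝ) (hℓ : 2 * (m : ℝ) < ℓ)
    (φ : EuclideanSpace ℝ (Fin n) → ℝ)
    (hφsmooth : ContDiff ℝ (⊤ : ℕ∞) φ) (hφsupp : HasCompactSupport φ)
    (hφ01 : ∀ x, 0 ≤ φ x ∧ φ x ≤ 1) :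
    ∃ C > (0 : ℝ), ∀ x,
      |(lapE n)^[m] (fun y => φ y ^ ℓ) x| ≤ C * φ x ^ (ℓ - 2 * (m : ℝ)) := by
  obtain ⟨g, hg, hg'⟩ := iterate_lapE_rpow hφsmooth (fun x => (hφ01 x).1) m hℓ.le
  obtain ⟨C, hC⟩ := hφsupp.isCompact.exists_bound_of_continuousOn hg.continuous.continuousOn
  refine ⟨max C 1, by positivity, fun x => ?_⟩
  have h0 : 0 ≤ φ x ^ (ℓ - 2 * (m : ℝ)) := Real.rpow_nonneg (hφ01 x).1 _
  rw [hg', abs_mul, abs_of_nonneg h0, mul_comm]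
  by_cases hx : x ∈ tsupport φ
  · exact mul_le_mul_of_nonneg_right ((hC x hx).trans (le_max_left _ _)) h0
  · rw [image_eq_zero_of_notMem_tsupport hx, Real.zero_rpow (by linarith)]
    simp
end
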